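/- arXiv:1701.06082 — 3 statements merged into one kernel-verified Lean document; each statement's English description precedes it below -/
import Mathlib

section
/- Let R be a commutative ring with identity, M a unitary R-module, and N a complementary submodule of M. Then N is a primal submodule of M if and only if (N : M) is a primal ideal of R. -/
/-- `S(N)` for a submodule `N` of `M`: the set of elements of `R` not prime to `N`. -/
def notPrimeTo {R : Type*} [CommRing R] {M : Type*} [AddCommGroup M] [Module R M]
    (N : Submodule R M) : Set R :=
  {r : R | ∃ m : M, m ∉ N ∧ r • m ∈ N}

/-- `S(I)` for an ideal `I` of `R`. -/
def notPrimeToIdeal {R : Type*} [CommRing R] (I : Ideal R) : Set R :=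
  {r : R | ∃ s : R, s ∉ I ∧ r * s ∈ I}

/-- A proper submodule `N` of `M` is *primal* if `S(N)` forms an ideal of `R`. -/
def IsPrimalSubmodule {R : Type*} [CommRing R] {M : Type*} [AddCommGroup M] [Module R M]
    (N : Submodule R M) : Prop :=
  N ≠ ⊤ ∧ ∃ I : Ideal R, (I : Set R) = notPrimeTo N

/-- A proper ideal `I` of `R` is *primal* if `S(I)` forms an ideal of `R`. -/
def IsPrimalIdeal {R : Type*} [CommRing R] (I : Ideal R) : Prop :=
  I ≠ ⊤ ∧ ∃ J : Ideal R, (J : Set R) = notPrimeToIdeal I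

/-- A proper submodule `N` of `M` is *complementary* if whenever `r • x ∉ N` for some
`x ∉ N`, then `r • y ∉ N` for all `y ∉ N`. -/
def IsComplementarySubmodule {R : Type*} [CommRing R] {M : Type*} [AddCommGroup M] [Module R M]
    (N : Submodule R M) : Prop :=
  N ≠ ⊤ ∧ ∀ r : R, (∃ x : M, x ∉ N ∧ r • x ∉ N) → ∀ y : M, y ∉ N → r • y ∉ N

/-!
For a complementary submodule `N`, a single `y ∉ N` with `r • y ∈ N` forces `r • M ⊆ N`, so
`S(N) = (N : M)`, which is an ideal. The ideal `(N : M)` inherits complementarity from `N`, as a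
submodule of `R`, so in the same way `S((N : M)) = (N : M)`.
-/

section

variable {R M : Type*} [CommRing R] [AddCommGroup M] [Module R M] {N : Submodule R M}

theorem colon_subset_notPrimeTo (hN : N ≠ ⊤) : (N.colon ⊤ : Set R) ⊆ notPrimeTo N := by
  obtain ⟨m, hm⟩ := SetLike.exists_not_mem_of_ne_top N hN
  exact fun r hr ↦ ⟨m, hm, Submodule.mem_colon.mp hr m trivial⟩

theorem isPrimalIdeal_iff_isPrimalSubmodule {I : Ideal R} :
    IsPrimalIdeal I ↔ IsPrimalSubmodule I :=
  Iff.rfl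

namespace IsComplementarySubmodule

theorem notPrimeTo_subset_colon (hc : IsComplementarySubmodule N) :
    notPrimeTo N ⊆ N.colon ⊤ := by
  rintro r ⟨y, hy, hry⟩
  refine Submodule.mem_colon.mpr fun x _ ↦ ?_
  by_contra hrx
  have hx : x ∉ N := fun hx ↦ hrx (N.smul_mem r hx)
  exact hc.2 r ⟨x, hx, hrx⟩ y hy hry

theorem coe_colon_eq_notPrimeTo (hc : IsComplementarySubmodule N) :
    (N.colon ⊤ : Set R) = notPrimeTo N :=
  (colon_subset_notPrimeTo hc.1).antisymm hc.notPrimeTo_subset_colon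

theorem isPrimalSubmodule (hc : IsComplementarySubmodule N) : IsPrimalSubmodule N :=
  ⟨hc.1, N.colon ⊤, hc.coe_colon_eq_notPrimeTo⟩

theorem colon (hc : IsComplementarySubmodule N) :
    IsComplementarySubmodule (N.colon ⊤ : Ideal R) := by
  refine ⟨fun htop ↦ hc.1 ?_, ?_⟩
  · simpa [Submodule.colon_eq_top_iff_subset] using htop
  · rintro r ⟨s, -, hrs⟩ t ht hrt
    obtain ⟨x, -, htx⟩ : ∃ x ∈ (⊤ : Set M), t • x ∉ N := by
      simpa only [Submodule.mem_colon, not_forall, exists_prop] using ht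
    have hrtx : r • t • x ∈ N := by
      simpa only [smul_assoc] using Submodule.mem_colon.mp hrt x trivial
    have hr : r ∈ N.colon ⊤ := hc.notPrimeTo_subset_colon ⟨t • x, htx, hrtx⟩
    exact hrs (Ideal.mul_mem_right s _ hr)

end IsComplementarySubmodule

end

/-- Corollary 3.7: a complementary submodule `N` of `M` is primal iff `(N : M)` is a
primal ideal of `R`. -/
theorem isPrimalSubmodule_iff_isPrimalIdeal_colon {R : Type*} [CommRing R] {M : Type*}
    [AddCommGroup M] [Module R M] (N : Submodule R M) (hc : IsComplementarySubmodule N) :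
    IsPrimalSubmodule N ↔ IsPrimalIdeal (N.colon ⊤) :=
  iff_of_true hc.isPrimalSubmodule
    (isPrimalIdeal_iff_isPrimalSubmodule.mpr hc.colon.isPrimalSubmodule)
end

section
/- Let R be a commutative ring with identity, M a unitary R-module, S a multiplicative closed set in R, and N a proper submodule of M such that (N : s) = N for all s ∈ S, where (N : s) = {x ∈ M : s·x ∈ N}. Then N is a prime submodule of M if and only if N_S is a prime submodule of the R_S-module M_S. -/
/-- A proper submodule `N` of `M` is *prime* if whenever `r • m ∈ N` with `r : R`, `m : M`,
then `m ∈ N` or `r • M ⊆ N` (i.e. `r ∈ N.colon ⊤`). -/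
def IsPrimeSubmodule {R : Type*} [CommRing R] {M : Type*} [AddCommGroup M] [Module R M]
    (N : Submodule R M) : Prop :=
  N ≠ ⊤ ∧ ∀ (r : R) (m : M), r • m ∈ N → m ∈ N ∨ r ∈ N.colon ⊤

section LocalizedSubmodule

variable {R M M' : Type*} [CommSemiring R] [AddCommMonoid M] [Module R M]
  {S : Submonoid R} {N : Submodule R M}
  (R' : Type*) [CommSemiring R'] [Algebra R R'] [IsLocalization S R']
  [AddCommMonoid M'] [Module R M'] [Module R' M'] [IsScalarTower R R' M']
  (f : M →ₗ[R] M') [IsLocalizedModule S f]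

theorem mk'_mem_localized'_iff_exists_smul_mem (m : M) (s : S) :
    IsLocalizedModule.mk' f m s ∈ N.localized' R' S f ↔ ∃ u : S, u • m ∈ N := by
  constructor
  · rintro ⟨n, hn, t, h_frac⟩
    obtain ⟨u, h_smul⟩ := (IsLocalizedModule.mk'_eq_mk'_iff f n m t s).mp h_frac
    refine ⟨u * t, ?_⟩
    rw [mul_smul, h_smul]
    exact N.smul_mem u (N.smul_mem s hn)
  · rintro ⟨u, hu⟩
    exact ⟨u • m, hu, u * s, IsLocalizedModule.mk'_cancel_left f m u s⟩

theorem mk'_mem_localized'_iff_mem (hsat : ∀ s ∈ S, ∀ x : M, s • x ∈ N → x ∈ N)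
    (m : M) (s : S) :
    IsLocalizedModule.mk' f m s ∈ N.localized' R' S f ↔ m ∈ N := by
  rw [mk'_mem_localized'_iff_exists_smul_mem]
  exact ⟨fun ⟨u, hu⟩ ↦ hsat u u.2 m hu, fun hm ↦ ⟨1, N.smul_mem 1 hm⟩⟩

theorem localized'_eq_top_iff (hsat : ∀ s ∈ S, ∀ x : M, s • x ∈ N → x ∈ N) :
    N.localized' R' S f = ⊤ ↔ N = ⊤ := by
  refine ⟨fun h ↦ ?_, fun h ↦ h ▸ Submodule.localized'_top R' S f⟩
  exact Submodule.eq_top_iff'.mpr fun x ↦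
    (mk'_mem_localized'_iff_mem R' f hsat x 1).mp (h ▸ Submodule.mem_top)

theorem mk'_smul_mk'_mem_localized'_iff (hsat : ∀ s ∈ S, ∀ x : M, s • x ∈ N → x ∈ N)
    (r : R) (m : M) (s t : S) :
    IsLocalization.mk' R' r s • IsLocalizedModule.mk' f m t ∈ N.localized' R' S f ↔
      r • m ∈ N := by
  rw [IsLocalizedModule.mk'_smul_mk', mk'_mem_localized'_iff_mem R' f hsat]

theorem mk'_mem_colon_localized'_iff (hsat : ∀ s ∈ S, ∀ x : M, s • x ∈ N → x ∈ N)
    (r : R) (s : S) :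
    IsLocalization.mk' R' r s ∈ (N.localized' R' S f).colon ⊤ ↔ r ∈ N.colon ⊤ := by
  simp only [Submodule.mem_colon, Set.top_eq_univ, Set.mem_univ, forall_true_left,
    (IsLocalizedModule.mk'_surjective S f).forall, Prod.forall, Function.uncurry_apply_pair,
    mk'_smul_mk'_mem_localized'_iff R' f hsat]
  exact ⟨fun h m ↦ h m 1, fun h m _ ↦ h m⟩

end LocalizedSubmodule

theorem isPrimeSubmodule_iff_localized_general {R M M' : Type*} [CommRing R]
    [AddCommGroup M] [Module R M] (S : Submonoid R) (N : Submodule R M)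
    (R' : Type*) [CommRing R'] [Algebra R R'] [IsLocalization S R']
    [AddCommGroup M'] [Module R M'] [Module R' M'] [IsScalarTower R R' M']
    (f : M →ₗ[R] M') [IsLocalizedModule S f]
    (hsat : ∀ s ∈ S, ∀ x : M, s • x ∈ N → x ∈ N) :
    IsPrimeSubmodule N ↔ IsPrimeSubmodule (N.localized' R' S f) := by
  refine and_congr (localized'_eq_top_iff R' f hsat).not.symm
    ⟨fun hN r' m' h ↦ ?_, fun hN r m h ↦ ?_⟩
  · obtain ⟨r, s, rfl⟩ := IsLocalization.exists_mk'_eq S r'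
    obtain ⟨⟨m, t⟩, rfl⟩ := IsLocalizedModule.mk'_surjective S f m'
    exact (hN r m ((mk'_smul_mk'_mem_localized'_iff R' f hsat r m s t).mp h)).imp
      (mk'_mem_localized'_iff_mem R' f hsat m t).mpr
      (mk'_mem_colon_localized'_iff R' f hsat r s).mpr
  · exact (hN _ _ ((mk'_smul_mk'_mem_localized'_iff R' f hsat r m 1 1).mpr h)).imp
      (mk'_mem_localized'_iff_mem R' f hsat m 1).mp
      (mk'_mem_colon_localized'_iff R' f hsat r 1).mp

/-- Proposition 3.13: let `S` be a multiplicative closed set in `R` and `N` a proper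
submodule of `M` such that `(N : s) = N` for all `s ∈ S`, where
`(N : s) = {x ∈ M : s • x ∈ N}`.  Then `N` is a prime submodule of `M` iff
`N_S = N.localized S` is a prime submodule of the `R_S`-module `M_S`. -/
theorem isPrimeSubmodule_iff_localized {R : Type*} [CommRing R] {M : Type*} [AddCommGroup M]
    [Module R M] (S : Submonoid R) (N : Submodule R M) (hN : N ≠ ⊤)
    (hcol : ∀ s ∈ S, {x : M | s • x ∈ N} = (N : Set M)) :
    IsPrimeSubmodule N ↔ IsPrimeSubmodule (N.localized S) :=
  isPrimeSubmodule_iff_localized_general S N (Localization S) (LocalizedModule.mkLinearMap S M)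
    fun s hs _ hx ↦ (hcol s hs).subset hx
end

section
/- Let R be a commutative ring with identity, M a unitary R-module, and S a multiplicative closed set in R. Suppose that for each proper submodule K of M and each s ∈ S, (K : s) = K. Then M is a lifting R-module if and only if M_S is a lifting R_S-module. -/
/-- `X` is *small in* the submodule `L` (i.e. `X ≪ L`, viewing `X` as a submodule of `L`):
`X + Y ≠ L` for every submodule `Y` properly contained in `L`. -/
def IsSmallIn {R : Type*} [CommRing R] {M : Type*} [AddCommGroup M] [Module R M]
    (X L : Submodule R M) : Prop :=
  ∀ Y : Submodule R M, Y < L → X ⊔ Y ≠ L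

/-- A module `M` is *lifting* if for every submodule `N` of `M` there are submodules `K`, `L`
of `M` with `M = K ⊕ L` (i.e. `K + L = M` and `K ∩ L = 0`), `K ≤ N` and `N ∩ L ≪ L`. -/
def IsLiftingModule (R M : Type*) [CommRing R] [AddCommGroup M] [Module R M] : Prop :=
  ∀ N : Submodule R M, ∃ K L : Submodule R M,
    K ⊔ L = ⊤ ∧ K ⊓ L = ⊥ ∧ K ≤ N ∧ IsSmallIn (N ⊓ L) L

/-!
Being lifting depends only on the lattice of submodules. The submodules of `M_S` correspond to the
`S`-saturated submodules of `M`, i.e. those `K` with `(K : s) = K` for all `s ∈ S`. Under the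
colon hypothesis every submodule of `M` is saturated, so the two lattices are isomorphic.
-/

section Localization

open Submodule

variable {R M M' : Type*} (Rₛ : Type*) [CommSemiring R] [CommSemiring Rₛ] [Algebra R Rₛ]
  [AddCommMonoid M] [Module R M] [AddCommMonoid M'] [Module R M'] [Module Rₛ M']
  [IsScalarTower R Rₛ M'] (S : Submonoid R) [IsLocalization S Rₛ]
  (f : M →ₗ[R] M') [IsLocalizedModule S f]

theorem map_mem_localized'_iff (K : Submodule R M) (x : M) :
    f x ∈ localized' Rₛ S f K ↔ ∃ s ∈ S, s • x ∈ K := by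
  rw [mem_localized']
  constructor
  · rintro ⟨m, hm, s, hms⟩
    have hfm : f m = f (s • x) := by
      rw [IsLocalizedModule.mk'_eq_iff.mp hms, LinearMap.map_smul_of_tower]
    obtain ⟨t, ht⟩ := (IsLocalizedModule.eq_iff_exists S f).mp hfm
    have hts : t • s • x ∈ K := ht ▸ K.smul_mem (t : R) hm
    exact ⟨t * s, S.mul_mem t.2 s.2, by rwa [mul_smul]⟩
  · rintro ⟨s, hs, hsx⟩
    exact ⟨s • x, hsx, ⟨s, hs⟩, IsLocalizedModule.mk'_cancel f x ⟨s, hs⟩⟩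

theorem comap_localized'_eq_self {K : Submodule R M}
    (hK : ∀ s ∈ S, ∀ x, s • x ∈ K → x ∈ K) :
    comap f ((localized' Rₛ S f K).restrictScalars R) = K := by
  ext x
  rw [mem_comap, restrictScalars_mem, map_mem_localized'_iff]
  exact ⟨fun ⟨s, hs, hsx⟩ ↦ hK s hs x hsx, fun hx ↦ ⟨1, S.one_mem, by rwa [one_smul]⟩⟩

/-- Localization `K ↦ K_S` as an isomorphism of submodule lattices, for a module all of whose
submodules are saturated with respect to `S`. The inverse is contraction along `f : M → M_S`. -/
def localizedOrderIso (hsat : ∀ K : Submodule R M, ∀ s ∈ S, ∀ x, s • x ∈ K → x ∈ K) :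
    Submodule R M ≃o Submodule Rₛ M' :=
  let gi := localized'gi Rₛ S f
  Equiv.toOrderIso
    { toFun := localized' Rₛ S f
      invFun := fun N ↦ comap f (N.restrictScalars R)
      left_inv := fun K ↦ comap_localized'_eq_self Rₛ S f (hsat K)
      right_inv := gi.l_u_eq }
    gi.gc.monotone_l gi.gc.monotone_u

end Localization

section Lifting

variable {R M R' M' : Type*} [CommRing R] [AddCommGroup M] [Module R M]
  [CommRing R'] [AddCommGroup M'] [Module R' M']

theorem IsSmallIn.map_orderIso {X L : Submodule R M} (h : IsSmallIn X L)
    (e : Submodule R M ≃o Submodule R' M') : IsSmallIn (e X) (e L) := by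
  intro Y hYL hsup
  refine h (e.symm Y) (e.symm_apply_lt.mpr hYL) (e.injective ?_)
  rw [map_sup, e.apply_symm_apply, hsup]

theorem IsLiftingModule.of_orderIso (h : IsLiftingModule R M)
    (e : Submodule R M ≃o Submodule R' M') : IsLiftingModule R' M' := by
  intro N
  obtain ⟨K, L, hsup, hinf, hKN, hsmall⟩ := h (e.symm N)
  refine ⟨e K, e L, ?_, ?_, e.le_symm_apply.mp hKN, ?_⟩
  · rw [← map_sup, hsup, map_top]
  · rw [← map_inf, hinf, map_bot]
  · simpa only [map_inf, e.apply_symm_apply] using hsmall.map_orderIso e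

theorem isLiftingModule_congr (e : Submodule R M ≃o Submodule R' M') :
    IsLiftingModule R M ↔ IsLiftingModule R' M' :=
  ⟨fun h ↦ h.of_orderIso e, fun h ↦ h.of_orderIso e.symm⟩

end Lifting

theorem isLifting_iff_localized_general {R M M' : Type*} (Rₛ : Type*) [CommRing R] [CommRing Rₛ]
    [Algebra R Rₛ] [AddCommGroup M] [Module R M] [AddCommGroup M'] [Module R M'] [Module Rₛ M']
    [IsScalarTower R Rₛ M'] (S : Submonoid R) [IsLocalization S Rₛ]
    (f : M →ₗ[R] M') [IsLocalizedModule S f]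
    (hcol : ∀ K : Submodule R M, K ≠ ⊤ → ∀ s ∈ S, {x : M | s • x ∈ K} = (K : Set M)) :
    IsLiftingModule R M ↔ IsLiftingModule Rₛ M' := by
  have hsat (K : Submodule R M) : ∀ s ∈ S, ∀ x, s • x ∈ K → x ∈ K := by
    intro s hs x hsx
    by_cases hK : K = ⊤
    · exact hK ▸ Submodule.mem_top
    · exact (hcol K hK s hs).subset hsx
  exact isLiftingModule_congr (localizedOrderIso Rₛ S f hsat)

/-- Proposition 3.19 (4): let `S` be a multiplicative closed set in `R`, and suppose
`(K : s) = K` for every proper submodule `K` of `M` and every `s ∈ S`.  Then `M` is a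
lifting `R`-module iff `M_S` is a lifting `R_S`-module. -/
theorem isLifting_iff_localized {R : Type*} [CommRing R] {M : Type*} [AddCommGroup M]
    [Module R M] (S : Submonoid R)
    (hcol : ∀ K : Submodule R M, K ≠ ⊤ → ∀ s ∈ S, {x : M | s • x ∈ K} = (K : Set M)) :
    IsLiftingModule R M ↔ IsLiftingModule (Localization S) (LocalizedModule S M) :=
  isLifting_iff_localized_general (Localization S) S (LocalizedModule.mkLinearMap S M) hcol
end
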